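/- arXiv:2407.07754 — 2 statements merged into one kernel-verified Lean document; each statement's English description precedes it below -/
import Mathlib

section
/- Hamiltonian path with jumps: Let G be a finite connected simple graph on a nonempty vertex set V, and let G^{(4)} be the simple graph on V in which distinct vertices u and v are adjacent if and only if their graph distance in G satisfies d_G(u,v) ≤ 4. Then G^{(4)} contains a Hamiltonian path, i.e., a path that visits every vertex of V exactly once. -/
/-!
The proof gives the stronger bound `3` on the jumps, by Sekanina's argument. Consider rooted
subtrees of `G`, built by joining two vertex-disjoint trees with roots `r` and `c` by an edge `rc`
of `G` and keeping `r` as the root. By induction, the vertices of such a tree can be listed along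
a path that starts at the root and ends within distance `1` of it: follow the listing of the tree
at `r` up to its end `x`, jump to the end `y` of the listing of the tree at `c`, and run that
listing backwards to `c`, which is adjacent to `r`. The jump has length at most
`d(x, r) + d(r, c) + d(c, y) ≤ 3` (`IsRootedTree.exists_path`).

A pendant vertex can always be attached to such a tree (`IsRootedTree.insert`), so a largest one
has no edge of `G` leaving it and, `G` being connected, spans `V`.
-/

/-- `IsRootedTree G r S`: the finite set `S` is the vertex set of a subtree of `G` rooted at `r`.
The tree itself is recorded only by the derivation: a single vertex, or two disjoint trees whose
roots are adjacent, the first root being kept. -/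
inductive IsRootedTree {V : Type} [DecidableEq V] (G : SimpleGraph V) : V → Finset V → Prop
  | single (r : V) : IsRootedTree G r {r}
  | join {r c : V} {A B : Finset V} (hA : IsRootedTree G r A) (hB : IsRootedTree G c B)
      (hrc : G.Adj r c) (hAB : Disjoint A B) : IsRootedTree G r (A ∪ B)

theorem IsRootedTree.root_mem {V : Type} [DecidableEq V] {G : SimpleGraph V} {r : V}
    {S : Finset V} (h : IsRootedTree G r S) : r ∈ S := by
  induction h with
  | single r => simp
  | join _ _ _ _ ihA _ => exact Finset.mem_union_left _ ihA

/-- A new vertex `v` can be attached as a leaf at any vertex `u` of the tree. -/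
theorem IsRootedTree.insert {V : Type} [DecidableEq V] {G : SimpleGraph V} {r u v : V}
    {S : Finset V} (h : IsRootedTree G r S) (hu : u ∈ S) (hv : v ∉ S) (huv : G.Adj u v) :
    IsRootedTree G r (S ∪ {v}) := by
  induction h with
  | single r =>
    obtain rfl : u = r := by simpa using hu
    exact .join (.single u) (.single v) huv (by simpa [eq_comm] using hv)
  | @join r c A B hA hB hrc hAB ihA ihB =>
    rw [Finset.mem_union, not_or] at hv
    rcases Finset.mem_union.1 hu with hu | hu
    · rw [Finset.union_right_comm]
      refine .join (ihA hu hv.1) hB hrc ?_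
      rw [Finset.disjoint_union_left]
      exact ⟨hAB, by simpa using hv.2⟩
    · rw [Finset.union_assoc]
      refine .join hA (ihB hu hv.2) hrc ?_
      rw [Finset.disjoint_union_right]
      exact ⟨hAB, by simpa using hv.1⟩

/-- The vertices of a rooted tree are traversed by a path of the power graph which starts at the
root and returns to within distance `1` of it; the latter keeps the jumps short when two such
paths are put together. -/
theorem IsRootedTree.exists_path {V : Type} [DecidableEq V] {G G4 : SimpleGraph V}
    (hG : G.Connected) (hG4 : ∀ u v : V, G4.Adj u v ↔ u ≠ v ∧ G.dist u v ≤ 4)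
    {r : V} {S : Finset V} (h : IsRootedTree G r S) :
    ∃ (x : V) (p : G4.Walk r x), p.IsPath ∧ (∀ v, v ∈ p.support ↔ v ∈ S) ∧ G.dist r x ≤ 1 := by
  induction h with
  | single r => exact ⟨r, .nil, by simp, by simp, by simp⟩
  | @join r c A B hA hB hrc hAB ihA ihB =>
    obtain ⟨x, p, hp, hpA, hx⟩ := ihA
    obtain ⟨y, q, hq, hqB, hy⟩ := ihB
    have hdisj : ∀ v, v ∈ p.support → v ∉ q.support := fun v h1 h2 =>
      Finset.disjoint_left.1 hAB ((hpA v).1 h1) ((hqB v).1 h2)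
    have hxy : G4.Adj x y := by
      rw [hG4]
      refine ⟨fun e => hdisj x p.end_mem_support (e ▸ q.end_mem_support), ?_⟩
      have h1 := hG.dist_triangle (u := x) (v := r) (w := y)
      have h2 := hG.dist_triangle (u := r) (v := c) (w := y)
      have h3 := SimpleGraph.dist_eq_one_iff_adj.2 hrc
      have h4 := G.dist_comm (u := x) (v := r)
      omega
    refine ⟨c, p.append (.cons hxy q.reverse), ?_, fun v => ?_,
      (SimpleGraph.dist_eq_one_iff_adj.2 hrc).le⟩
    · rw [SimpleGraph.Walk.isPath_def, SimpleGraph.Walk.support_append,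
        SimpleGraph.Walk.support_cons, List.tail_cons, SimpleGraph.Walk.support_reverse,
        List.nodup_append']
      exact ⟨hp.support_nodup, List.nodup_reverse.2 hq.support_nodup,
        fun v h1 h2 => hdisj v h1 (List.mem_reverse.1 h2)⟩
    · rw [SimpleGraph.Walk.support_append, SimpleGraph.Walk.support_cons, List.tail_cons,
        SimpleGraph.Walk.support_reverse, List.mem_append, List.mem_reverse, hpA, hqB,
        Finset.mem_union]

/-- In a finite connected graph, a rooted tree of maximal size spans. -/
theorem IsRootedTree.univ {V : Type} [Fintype V] [DecidableEq V] {G : SimpleGraph V}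
    (hG : G.Connected) (r : V) : IsRootedTree G r Finset.univ := by
  classical
  obtain ⟨S, hS, hmax⟩ := Finset.exists_max_image
    (Finset.univ.filter fun S : Finset V => IsRootedTree G r S) Finset.card
    ⟨{r}, by simpa using IsRootedTree.single r⟩
  simp only [Finset.mem_filter, Finset.mem_univ, true_and] at hS hmax
  suffices h : S = Finset.univ from h ▸ hS
  rw [Finset.eq_univ_iff_forall]
  by_contra! hw
  obtain ⟨w, hw⟩ := hw
  obtain ⟨p⟩ := hG.preconnected r w
  -- A walk from the root to a missed vertex leaves `S` along some edge, which enlarges the tree.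
  obtain ⟨d, -, hd1, hd2⟩ := p.exists_boundary_dart (S : Set V) hS.root_mem hw
  have h := hmax _ (hS.insert hd1 hd2 d.adj)
  rw [Finset.card_union_of_disjoint (by simpa using hd2), Finset.card_singleton] at h
  omega

/-- **Hamiltonian path with jumps.**
For any finite connected simple graph `G`, the graph `G⁽⁴⁾` on the same vertices, in which
two distinct vertices are adjacent iff their graph distance in `G` is at most `4`,
contains a Hamiltonian path. -/
theorem hamiltonian_path_with_jumps
    {V : Type} [Fintype V] [DecidableEq V] [Nonempty V]
    (G : SimpleGraph V) (hG : G.Connected)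
    (G4 : SimpleGraph V)
    (hG4 : ∀ u v : V, G4.Adj u v ↔ u ≠ v ∧ G.dist u v ≤ 4) :
    ∃ (u v : V) (p : G4.Walk u v), p.IsHamiltonian := by
  obtain ⟨r⟩ := ‹Nonempty V›
  obtain ⟨x, p, hp, hmem, -⟩ := (IsRootedTree.univ hG r).exists_path hG hG4
  exact ⟨r, x, p, hp.isHamiltonian_of_mem fun w => (hmem w).2 (Finset.mem_univ w)⟩
end

section
/- Permutation-operator overlap lower bound: Let D ≥ 1 and N ≥ 1 be integers and let ψ₁, …, ψ_N ∈ ℂ^D be unit vectors. Then the complex number ∑_{π ∈ S_N} Tr( P_π · (|ψ₁⟩⟨ψ₁| ⊗ ⋯ ⊗ |ψ_N⟩⟨ψ_N|) ) is real and satisfies ∑_{π ∈ S_N} Tr( P_π · (|ψ₁⟩⟨ψ₁| ⊗ ⋯ ⊗ |ψ_N⟩⟨ψ_N|) ) ≥ 1. -/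
/-!
Write `S f = ∑ π, ∏ i, ψ i (f (π i))` for the symmetrization of the product tensor
`ψ₁ ⊗ ⋯ ⊗ ψ_N`, without normalization (`symSum` below). The sum of traces equals
`∑ f, (∏ i, ψ i (f i)) * conj (S f)`, and since `S` is invariant under permutations of the
factors, this is `(1 / N!) ∑ f, ‖S f‖ ^ 2` (`sum_normSq_symSum`). Hence it is real and nonnegative.

The lower bound is the Fock space estimate `‖a†(φ) Φ‖² = ‖φ‖² ‖Φ‖² + ‖a(φ) Φ‖² ≥ ‖Φ‖²` for a unit
vector `φ`, which follows from the commutation relation of the creation and annihilation operators.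
In coordinates, expand `S` for `N + 1` vectors according to the slot occupied by the first vector
(`symSum_succ`). The term in which it stays in slot `0` contributes `‖φ‖² ‖Φ‖²`, and each of the
other terms is a squared norm of the partial contraction of `Φ` against `φ` in a single slot
(`sum_contract_eq`). So the norm squared of `S` grows by a factor of at least `N + 1` when
a unit vector is added, and induction gives `N! ≤ ∑ f, ‖S f‖ ^ 2`.
-/

open scoped BigOperators

noncomputable section

namespace QI

/-- The permutation operator on the `N`-fold tensor power `(ℂ^D)^{⊗N}`
    (realized on the index type `Fin N → Fin D`):
    `P_π (v_1 ⊗ ⋯ ⊗ v_N) = v_{π⁻¹(1)} ⊗ ⋯ ⊗ v_{π⁻¹(N)}`. -/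
def permMat (D N : ℕ) (π : Equiv.Perm (Fin N)) :
    Matrix (Fin N → Fin D) (Fin N → Fin D) ℂ :=
  fun f g => if f = g ∘ ⇑π⁻¹ then 1 else 0

/-- The tensor product `|ψ₁⟩⟨ψ₁| ⊗ ⋯ ⊗ |ψ_N⟩⟨ψ_N|` of rank-one projectors. -/
def projTensor (D N : ℕ) (ψ : Fin N → (Fin D → ℂ)) :
    Matrix (Fin N → Fin D) (Fin N → Fin D) ℂ :=
  fun f g => ∏ i : Fin N, ψ i (f i) * (starRingEnd ℂ) (ψ i (g i))

end QI

open QI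

/-- The unnormalized symmetrization of `ψ₁ ⊗ ⋯ ⊗ ψ_n`, as a function of the multi-index `f`. -/
def symSum {ι : Type*} {n : ℕ} (ψ : Fin n → ι → ℂ) (f : Fin n → ι) : ℂ :=
  ∑ π : Equiv.Perm (Fin n), ∏ i, ψ i (f (π i))

lemma symSum_comp {ι : Type*} {n : ℕ} (ψ : Fin n → ι → ℂ) (f : Fin n → ι)
    (σ : Equiv.Perm (Fin n)) : symSum ψ (f ∘ σ) = symSum ψ f := by
  unfold symSum
  exact Fintype.sum_equiv (Equiv.mulLeft σ) _ _ (fun π => by simp)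

/-- A sum over multi-indices does not change when the slots are permuted. -/
lemma sum_comp_perm {ι : Type*} [Fintype ι] {n : ℕ} (σ : Equiv.Perm (Fin n))
    (F : (Fin n → ι) → ℂ) : ∑ f, F (f ∘ σ) = ∑ f, F f :=
  Fintype.sum_equiv (Equiv.arrowCongr σ.symm (Equiv.refl ι)) _ _ (fun _ => rfl)

/-- The symmetrization is `n!` times an orthogonal projection of the product tensor, so its squared
norm is `n!` times its overlap with the product tensor. -/
lemma sum_normSq_symSum {ι : Type*} [Fintype ι] {n : ℕ} (ψ : Fin n → ι → ℂ) :
    ((∑ f, ‖symSum ψ f‖ ^ 2 : ℝ) : ℂ) =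
      (n.factorial : ℂ) * ∑ f : Fin n → ι, (∏ i, ψ i (f i)) * (starRingEnd ℂ) (symSum ψ f) := by
  have h : ∀ f : Fin n → ι, ((‖symSum ψ f‖ ^ 2 : ℝ) : ℂ) =
      ∑ π : Equiv.Perm (Fin n), (∏ i, ψ i ((f ∘ π) i)) * (starRingEnd ℂ) (symSum ψ (f ∘ π)) := by
    intro f
    simp_rw [symSum_comp]
    rw [← Finset.sum_mul]
    push_cast
    rw [← Complex.mul_conj']
    rfl
  rw [Complex.ofReal_sum]
  simp_rw [h]
  rw [Finset.sum_comm]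
  simp_rw [sum_comp_perm _ (fun f : Fin n → ι =>
    (∏ i, ψ i (f i)) * (starRingEnd ℂ) (symSum ψ f))]
  simp [Fintype.card_perm]

/-- Expansion of the symmetrization according to the slot `p` occupied by the first vector. -/
lemma symSum_succ {ι : Type*} {n : ℕ} (ψ : Fin (n + 1) → ι → ℂ) (f : Fin (n + 1) → ι) :
    symSum ψ f = ∑ p, ψ 0 (f p) *
      symSum (fun i => ψ i.succ) (fun i => f (Equiv.swap 0 p i.succ)) := by
  unfold symSum
  rw [← Equiv.sum_comp Equiv.Perm.decomposeFin.symm, Fintype.sum_prod_type]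
  refine Finset.sum_congr rfl fun p _ => ?_
  rw [Finset.mul_sum]
  refine Finset.sum_congr rfl fun e _ => ?_
  rw [Fin.prod_univ_succ]
  simp

/-- Positivity of the exchange terms: the sum is the squared norm of the contraction of `S` against
`φ` in slot `k`. -/
lemma sum_contract_eq {ι : Type*} [Fintype ι] {n : ℕ} (φ : ι → ℂ)
    (S : (Fin n → ι) → ℂ) (k : Fin n) :
    ∃ r : ℝ, 0 ≤ r ∧ ∑ a, ∑ h : Fin n → ι, (starRingEnd ℂ) (φ a * S h) *
      (φ (h k) * S (Function.update h k a)) = r := by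
  classical
  let e := (Equiv.funSplitAt k ι).symm
  let R : ({j // j ≠ k} → ι) → ℂ := fun g => ∑ a, (starRingEnd ℂ) (φ a) * S (e (a, g))
  refine ⟨∑ g, ‖R g‖ ^ 2, by positivity, ?_⟩
  have hk : ∀ b g, e (b, g) k = b := by intro b g; simp [e, Equiv.funSplitAt]
  have hu : ∀ a b g, Function.update (e (b, g)) k a = e (a, g) := by
    intro a b g
    ext j
    by_cases hj : j = k
    · subst hj; simp [hk]
    · simp [e, Equiv.funSplitAt, hj]
  have h1 : ∀ a, ∑ h : Fin n → ι, (starRingEnd ℂ) (φ a * S h) *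
      (φ (h k) * S (Function.update h k a)) = ∑ g, ∑ b, (starRingEnd ℂ) (φ a * S (e (b, g))) *
      (φ b * S (e (a, g))) := by
    intro a
    rw [← Equiv.sum_comp e, Fintype.sum_prod_type_right]
    simp_rw [hu, hk]
  simp_rw [h1]
  rw [Finset.sum_comm]
  push_cast
  refine Finset.sum_congr rfl fun g _ => ?_
  rw [← Complex.mul_conj', map_sum, Finset.sum_mul_sum]
  refine Finset.sum_congr rfl fun a _ => Finset.sum_congr rfl fun b _ => ?_
  simp only [map_mul, Complex.conj_conj]
  ring

/-- Overlap of the term of `symSum_succ` for slot `0` with the whole expansion. -/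
lemma sum_overlap_succ {ι : Type*} [Fintype ι] {n : ℕ} (ψ : Fin (n + 1) → ι → ℂ)
    (h0 : ∑ j, ‖ψ 0 j‖ ^ 2 = 1) :
    ∃ r : ℝ, 0 ≤ r ∧ ∑ f : Fin (n + 1) → ι,
      (starRingEnd ℂ) (ψ 0 (f 0) * symSum (fun i => ψ i.succ) (fun i => f i.succ)) *
        symSum ψ f = ((∑ f, ‖symSum (fun i => ψ i.succ) f‖ ^ 2 + r : ℝ) : ℂ) := by
  classical
  set S := symSum (fun i => ψ i.succ) with hS
  choose r hr hre using sum_contract_eq (ψ 0) S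
  refine ⟨∑ k, r k, Finset.sum_nonneg fun k _ => hr k, ?_⟩
  have hcons : ∀ F : (Fin (n + 1) → ι) → ℂ,
      ∑ f, F f = ∑ a, ∑ h : Fin n → ι, F (Fin.cons a h) := by
    intro F
    rw [← Equiv.sum_comp (Fin.consEquiv (fun _ => ι)), Fintype.sum_prod_type]
    rfl
  have hrec : ∀ (a : ι) (h : Fin n → ι), symSum ψ (Fin.cons a h : Fin (n + 1) → ι) =
      ψ 0 a * S h + ∑ k, ψ 0 (h k) * S (Function.update h k a) := by
    intro a h
    rw [symSum_succ, Fin.sum_univ_succ]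
    simp only [Fin.cons_zero, Equiv.swap_self, Equiv.refl_apply, Fin.cons_succ]
    congr 1
    refine Finset.sum_congr rfl fun k _ => ?_
    congr 2
    ext i
    by_cases hi : i = k
    · subst hi; simp
    · rw [Equiv.swap_apply_of_ne_of_ne (Fin.succ_ne_zero i) (by simpa using hi)]
      simp [hi]
  rw [hcons]
  simp_rw [hrec, Fin.cons_zero, Fin.cons_succ, mul_add, Finset.sum_add_distrib, Finset.mul_sum]
  rw [Complex.ofReal_add]
  congr 1
  · have : ∀ a h, (starRingEnd ℂ) (ψ 0 a * S h) * (ψ 0 a * S h) =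
        ((‖ψ 0 a‖ ^ 2 * ‖S h‖ ^ 2 : ℝ) : ℂ) := by
      intro a h
      rw [Complex.conj_mul', norm_mul]
      push_cast
      ring
    simp_rw [this, ← Complex.ofReal_sum]
    rw [← Finset.sum_mul_sum, h0, one_mul]
  · rw [Complex.ofReal_sum]
    simp_rw [← hre]
    exact (Finset.sum_congr rfl fun a _ => Finset.sum_comm).trans Finset.sum_comm

/-- Adding a unit vector multiplies the squared norm of the symmetrization by at least `n + 1`. -/
lemma symSum_norm_succ {ι : Type*} [Fintype ι] {n : ℕ} (ψ : Fin (n + 1) → ι → ℂ)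
    (h0 : ∑ j, ‖ψ 0 j‖ ^ 2 = 1) :
    (n + 1 : ℝ) * ∑ f, ‖symSum (fun i => ψ i.succ) f‖ ^ 2 ≤ ∑ f, ‖symSum ψ f‖ ^ 2 := by
  obtain ⟨r, hr, hre⟩ := sum_overlap_succ ψ h0
  set S := symSum (fun i => ψ i.succ) with hS
  let T : (Fin (n + 1) → ι) → ℂ := fun f => ψ 0 (f 0) * S (fun i => f i.succ)
  have hT : ∀ f, symSum ψ f = ∑ p, T (f ∘ Equiv.swap 0 p) := by
    intro f
    rw [symSum_succ]
    simp [T, hS]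
  have h : ((∑ f, ‖symSum ψ f‖ ^ 2 : ℝ) : ℂ) =
      (((n + 1 : ℝ) * (∑ f, ‖S f‖ ^ 2 + r) : ℝ) : ℂ) := by
    have h1 : ∀ f, ((‖symSum ψ f‖ ^ 2 : ℝ) : ℂ) = ∑ p, (starRingEnd ℂ)
        (T (f ∘ Equiv.swap 0 p)) * symSum ψ (f ∘ Equiv.swap 0 p) := by
      intro f
      simp_rw [symSum_comp]
      rw [← Finset.sum_mul, ← map_sum, ← hT, Complex.conj_mul']
      push_cast
      rfl
    rw [Complex.ofReal_mul, ← hre, Complex.ofReal_sum]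
    simp_rw [h1]
    rw [Finset.sum_comm]
    simp_rw [sum_comp_perm _ (fun f => (starRingEnd ℂ) (T f) * symSum ψ f)]
    simp [T]
  rw [Complex.ofReal_inj.mp h]
  gcongr
  linarith

lemma factorial_le_sum_symSum {ι : Type*} [Fintype ι] {n : ℕ} (ψ : Fin n → ι → ℂ)
    (hψ : ∀ i, ∑ j, ‖ψ i j‖ ^ 2 = 1) : (n.factorial : ℝ) ≤ ∑ f, ‖symSum ψ f‖ ^ 2 := by
  induction n with
  | zero => simp [symSum]
  | succ n ih =>
    refine le_trans ?_ (symSum_norm_succ ψ (hψ 0))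
    rw [Nat.factorial_succ]
    push_cast
    gcongr
    exact ih _ fun i => hψ i.succ

lemma sum_trace_eq (D N : ℕ) (ψ : Fin N → Fin D → ℂ) :
    ∑ π : Equiv.Perm (Fin N), (permMat D N π * projTensor D N ψ).trace =
      ∑ f : Fin N → Fin D, (∏ i, ψ i (f i)) * (starRingEnd ℂ) (symSum ψ f) := by
  have h : ∀ π : Equiv.Perm (Fin N), (permMat D N π * projTensor D N ψ).trace =
      ∑ f : Fin N → Fin D, (∏ i, ψ i (f i)) * (starRingEnd ℂ) (∏ i, ψ i (f (π⁻¹ i))) := by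
    intro π
    simp only [Matrix.trace, Matrix.diag, Matrix.mul_apply, permMat, projTensor, ite_mul, one_mul,
      zero_mul]
    rw [Finset.sum_comm]
    refine Finset.sum_congr rfl fun g _ => ?_
    rw [Finset.sum_ite_eq' Finset.univ (g ∘ ⇑π⁻¹), if_pos (Finset.mem_univ _),
      Finset.prod_mul_distrib, map_prod]
    rfl
  simp_rw [h]
  rw [Finset.sum_comm]
  refine Finset.sum_congr rfl fun f _ => ?_
  rw [← Finset.mul_sum, symSum, map_sum]
  congr 1
  exact Equiv.sum_comp (Equiv.inv (Equiv.Perm (Fin N)))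
    (fun π => (starRingEnd ℂ) (∏ i, ψ i (f (π i))))

/-- **Permutation-operator overlap lower bound.**
For unit vectors `ψ₁, …, ψ_N ∈ ℂ^D`, the number
`∑_{π ∈ S_N} Tr(P_π · (|ψ₁⟩⟨ψ₁| ⊗ ⋯ ⊗ |ψ_N⟩⟨ψ_N|))` is real and at least `1`. -/
theorem permutation_operator_overlap_lower_bound
    (D N : ℕ) (hD : 1 ≤ D) (hN : 1 ≤ N)
    (ψ : Fin N → (Fin D → ℂ)) (hψ : ∀ i, ∑ j : Fin D, ‖ψ i j‖ ^ 2 = 1) :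
    (∑ π : Equiv.Perm (Fin N),
        (permMat D N π * projTensor D N ψ).trace).im = 0 ∧
    1 ≤ (∑ π : Equiv.Perm (Fin N),
        (permMat D N π * projTensor D N ψ).trace).re := by
  have hfac : (0 : ℝ) < N.factorial := by positivity
  have hnorm := sum_normSq_symSum ψ
  rw [← sum_trace_eq] at hnorm
  have hbound := factorial_le_sum_symSum ψ hψ
  set z := ∑ π : Equiv.Perm (Fin N), (permMat D N π * projTensor D N ψ).trace
  have hz : z = (((∑ f, ‖symSum ψ f‖ ^ 2) / N.factorial : ℝ) : ℂ) := by
    rw [Complex.ofReal_div, hnorm, Complex.ofReal_natCast]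
    exact (mul_div_cancel_left₀ z (by exact_mod_cast hfac.ne')).symm
  rw [hz, Complex.ofReal_im, Complex.ofReal_re]
  exact ⟨rfl, (one_le_div hfac).mpr hbound⟩
end
end
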